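/- arXiv:2402.10199 — 2 statements merged into one kernel-verified Lean document; each statement's English description precedes it below -/
import Mathlib

section
/- Assume Setting (C) and suppose the sequence 𝓗 = {log h_n} is weakly almost additive on Y. If the 2×2 submatrix M_{22}|_{π^{-1}(22)} is not similar over ℝ to diag(α, −α) for any α ≠ 0, then the limits lim_{n→∞} h[2^{n+2}]/h[2^{n+1}] and lim_{n→∞} h[2^{n+2}1]/h[2^{n+1}1] both exist and are equal (so the function ĥ(y) = lim_n log(h_n(y)/h_{n-1}(σ_Y y)) is continuous at the point 2^∞ ∈ Y). -/
open MeasureTheory Filter Topology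

noncomputable section

/-- The one-sided shift map. -/
def shift {A : Type*} : (ℕ → A) → ℕ → A := fun x i => x (i + 1)

/-- A finite word appears in some point of `X`. -/
def AppearsIn {A : Type*} (X : Set (ℕ → A)) (w : List A) : Prop :=
  ∃ x ∈ X, ∃ m : ℕ, ∀ i : Fin w.length, x (m + i) = w.get i

/-- `X` is a (one-sided) subshift: a closed, shift-invariant set. -/
def IsSubshift {A : Type*} [TopologicalSpace A] (X : Set (ℕ → A)) : Prop :=
  IsClosed X ∧ shift '' X ⊆ X

/-- The weak specification property. -/
def WeakSpec {A : Type*} (X : Set (ℕ → A)) : Prop :=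
  ∃ p : ℕ, ∀ u v : List A, AppearsIn X u → AppearsIn X v →
    ∃ w : List A, w.length ≤ p ∧ AppearsIn X (u ++ w ++ v)

/-- The cylinder set `[x_1 … x_n]` inside `X`. -/
def cyl {A : Type*} (X : Set (ℕ → A)) (x : ℕ → A) (n : ℕ) : Set (ℕ → A) :=
  {z ∈ X | ∀ i < n, z i = x i}

/-- Birkhoff sum `(S_n g)(x)`. -/
def birk {A : Type*} (g : (ℕ → A) → ℝ) (n : ℕ) (x : ℕ → A) : ℝ :=
  ∑ i ∈ Finset.range n, g (shift^[i] x)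

/-- `μ` is a shift-invariant Borel probability measure concentrated on `X`,
i.e. an element of `M(X, σ_X)`. -/
def IsInvariantOn {A : Type*} [MeasurableSpace A] (μ : Measure (ℕ → A))
    (X : Set (ℕ → A)) : Prop :=
  IsProbabilityMeasure μ ∧ μ X = 1 ∧
    ∀ B : Set (ℕ → A), MeasurableSet B → μ (shift ⁻¹' B) = μ B

/-- `μ` is a Gibbs measure for the sequence `𝓕 = {log f_n}`. -/
def GibbsSeq {A : Type*} [MeasurableSpace A] (X : Set (ℕ → A))
    (f : ℕ → (ℕ → A) → ℝ) (μ : Measure (ℕ → A)) : Prop :=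
  ∃ P C : ℝ, 0 < C ∧ ∀ x ∈ X, ∀ n : ℕ, 1 ≤ n →
    C⁻¹ ≤ (μ (cyl X x n)).toReal / (Real.exp (-(n : ℝ) * P) * f n x) ∧
    (μ (cyl X x n)).toReal / (Real.exp (-(n : ℝ) * P) * f n x) ≤ C

/-- `μ` is a weak Gibbs measure for the sequence `𝓕 = {log f_n}`. -/
def WeakGibbsSeq {A : Type*} [MeasurableSpace A] (X : Set (ℕ → A))
    (f : ℕ → (ℕ → A) → ℝ) (μ : Measure (ℕ → A)) : Prop :=
  ∃ P : ℝ, ∃ C : ℕ → ℝ, (∀ n : ℕ, 1 ≤ n → 0 < C n) ∧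
    Tendsto (fun n : ℕ => Real.log (C n) / n) atTop (𝓝 0) ∧
    ∀ x ∈ X, ∀ n : ℕ, 1 ≤ n →
      (C n)⁻¹ ≤ (μ (cyl X x n)).toReal / (Real.exp (-(n : ℝ) * P) * f n x) ∧
      (μ (cyl X x n)).toReal / (Real.exp (-(n : ℝ) * P) * f n x) ≤ C n

/-- `μ` is a Gibbs measure for the (Borel measurable) function `g`. -/
def GibbsFun {A : Type*} [MeasurableSpace A] (X : Set (ℕ → A))
    (g : (ℕ → A) → ℝ) (μ : Measure (ℕ → A)) : Prop :=
  GibbsSeq X (fun n x => Real.exp (birk g n x)) μ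

/-- `μ` is a weak Gibbs measure for the (Borel measurable) function `g`. -/
def WeakGibbsFun {A : Type*} [MeasurableSpace A] (X : Set (ℕ → A))
    (g : (ℕ → A) → ℝ) (μ : Measure (ℕ → A)) : Prop :=
  WeakGibbsSeq X (fun n x => Real.exp (birk g n x)) μ

/-- The sequence `{log f_n}` is almost additive on `X` with constant `C`. -/
def AAOn {A : Type*} (X : Set (ℕ → A)) (f : ℕ → (ℕ → A) → ℝ) (C : ℝ) : Prop :=
  ∀ x ∈ X, ∀ n m : ℕ, 1 ≤ n → 1 ≤ m →
    Real.exp (-C) * (f n x * f m (shift^[n] x)) ≤ f (n + m) x ∧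
    f (n + m) x ≤ Real.exp C * (f n x * f m (shift^[n] x))

/-- The sequence `{log f_n}` is weakly almost additive on `X`. -/
def WeakAAOn {A : Type*} (X : Set (ℕ → A)) (f : ℕ → (ℕ → A) → ℝ) : Prop :=
  ∃ C : ℕ → ℝ, (∀ n : ℕ, 1 ≤ n → 0 < C n) ∧
    Tendsto (fun n : ℕ => C n / n) atTop (𝓝 0) ∧
    ∀ x ∈ X, ∀ n m : ℕ, 1 ≤ n → 1 ≤ m →
      Real.exp (-(C n)) * (f n x * f m (shift^[n] x)) ≤ f (n + m) x ∧
      f (n + m) x ≤ Real.exp (C n) * (f n x * f m (shift^[n] x))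

open scoped Classical

/-- `g_n(y) = sup_{E_n(y)} Σ_{x ∈ E_n(y)} e^{(S_n f)(x)}`: the sum, over all `n`-blocks
of `X` projecting to `y_1…y_n`, of the sup of `e^{S_n f}` over the corresponding
cylinder. -/
noncomputable def gseq {kX kY : ℕ} (X : Set (ℕ → Fin kX)) (πs : Fin kX → Fin kY)
    (f : (ℕ → Fin kX) → ℝ) (n : ℕ) (y : ℕ → Fin kY) : ℝ :=
  ∑ u : Fin n → Fin kX,
    if ((∃ x ∈ X, ∀ i : Fin n, x ↑i = u i) ∧ ∀ i : Fin n, πs (u i) = y ↑i) then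
      ⨆ x : ↥{z ∈ X | ∀ i : Fin n, z ↑i = u i}, Real.exp (birk f n ↑x)
    else 0

/-- `h_n(y) = sup_{E_n(y)} Σ_{x ∈ E_n(y)} e^{(S_{n-1} f)(x)}` for `n ≥ 2`, and
`h_1 = g_1`. -/
noncomputable def hseqS {kX kY : ℕ} (X : Set (ℕ → Fin kX)) (πs : Fin kX → Fin kY)
    (f : (ℕ → Fin kX) → ℝ) (n : ℕ) (y : ℕ → Fin kY) : ℝ :=
  if n ≤ 1 then gseq X πs f n y
  else
    ∑ u : Fin n → Fin kX,
      if ((∃ x ∈ X, ∀ i : Fin n, x ↑i = u i) ∧ ∀ i : Fin n, πs (u i) = y ↑i) then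
        ⨆ x : ↥{z ∈ X | ∀ i : Fin n, z ↑i = u i}, Real.exp (birk f (n - 1) ↑x)
      else 0

/-- Irreducibility of a subshift: any two words appearing in `X` can be connected. -/
def IrreducibleShift {A : Type*} (X : Set (ℕ → A)) : Prop :=
  ∀ u v : List A, AppearsIn X u → AppearsIn X v →
    ∃ w : List A, AppearsIn X (u ++ w ++ v)

/-- For a factor map collapsing all symbols except `0`, and a two-coordinate potential
given by `F`: `h_n(y)` is the sum over `n`-blocks `x_1…x_n` of `X` with
`π(x_1)…π(x_n) = y_1…y_n` of `e^{F(x_1,x_2)+⋯+F(x_{n-1},x_n)}` (for `n ≥ 2`), and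
`h_1(y) = Σ_{a : π(a) = y_1} sup_{x ∈ [a]} e^{f(x)}`. -/
noncomputable def hseqC {l : ℕ} (X : Set (ℕ → Fin l)) (πs : Fin l → Fin 2)
    (F : Fin l → Fin l → ℝ) (f : (ℕ → Fin l) → ℝ) (n : ℕ) (y : ℕ → Fin 2) : ℝ :=
  if n ≤ 1 then
    ∑ a : Fin l,
      if πs a = y 0 then (⨆ x : ↥{z ∈ X | z 0 = a}, Real.exp (f ↑x)) else 0
  else
    ∑ u : Fin n → Fin l,
      if ((∃ x ∈ X, ∀ i : Fin n, x ↑i = u i) ∧ ∀ i : Fin n, πs (u i) = y ↑i) then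
        Real.exp (∑ i : Fin n,
          if h : (↑i + 1 : ℕ) < n then F (u i) (u ⟨↑i + 1, h⟩) else 0)
      else 0

/-- The one-block map of Setting (C): symbol `1` (here `0`) goes to `1` (here `0`),
symbols `2, 3` (here `1, 2`) go to `2` (here `1`). -/
def projC {l : ℕ} : Fin l → Fin 2 := fun a => if (a : ℕ) = 0 then 0 else 1

/-- The matrix `M(i,j) = e^{f[ij]} a_{ij}` of Setting (C). -/
noncomputable def MC {l : ℕ} (A : Fin l → Fin l → ℕ) (F : Fin l → Fin l → ℝ) :
    Fin l → Fin l → ℝ := fun i j => Real.exp (F i j) * (A i j : ℝ)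

/-- Similarity of `2 × 2` real matrices. -/
def Similar2 (M N : Matrix (Fin 2) (Fin 2) ℝ) : Prop :=
  ∃ P : Matrix (Fin 2) (Fin 2) ℝ, IsUnit P.det ∧ N = P⁻¹ * M * P

/-!
Let `B` be the `2 × 2` matrix of weights of the blocks of `X` over `22`, and let `v` be the column
of weights of the blocks from the symbols `2`, `3` to the symbol `1`. Then
`h[2^{n+2}] = 1ᵀ B^{n+1} 1` and `h[2^{n+1}1] = 1ᵀ Bⁿ v`. By Cayley–Hamilton both sequences satisfy
the second-order linear recurrence whose characteristic roots are the eigenvalues `m ≤ l` of `B`,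
which are real because `B` is nonnegative. The trace of `B` is positive, since otherwise `B` is
antidiagonal with positive entries and so similar to `diag(α, -α)`. Hence either `|m| < l` or
`m = l > 0`, and a solution of the recurrence has ratios tending to `l` unless it is a multiple of
`mⁿ` with `m < l`. That case would make the nonnegative starting vector an eigenvector of `B` for
`m`; a positive vector cannot be one, and for `v` this forces a symbol with a loop that can never
be left, contradicting irreducibility.
-/

section LinearRecurrence

theorem sub_mul_eq_of_recurrence {R : Type*} [CommRing R] {s : ℕ → R} {l m : R}
    (hs : ∀ n, s (n + 2) = (l + m) * s (n + 1) - l * m * s n) (n : ℕ) :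
    (l - m) * s n = l ^ n * (s 1 - m * s 0) - m ^ n * (s 1 - l * s 0) := by
  have hl : ∀ n, s (n + 1) - m * s n = l ^ n * (s 1 - m * s 0) := fun n => by
    induction n with
    | zero => simp
    | succ n ih => linear_combination hs n + l * ih
  have hm : ∀ n, s (n + 1) - l * s n = m ^ n * (s 1 - l * s 0) := fun n => by
    induction n with
    | zero => simp
    | succ n ih => linear_combination hs n + m * ih
  rw [← hl, ← hm]
  ring

theorem tendsto_ratio_of_recurrence_of_norm_lt {𝕜 : Type*} [NormedField 𝕜] {s : ℕ → 𝕜} {l m : 𝕜}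
    (hs : ∀ n, s (n + 2) = (l + m) * s (n + 1) - l * m * s n) (hml : ‖m‖ < ‖l‖)
    (h1 : s 1 ≠ m * s 0) :
    Tendsto (fun n => s (n + 1) / s n) atTop (𝓝 l) := by
  have hl : l ≠ 0 := norm_pos_iff.1 ((norm_nonneg m).trans_lt hml)
  have hlm : l - m ≠ 0 := sub_ne_zero.2 fun h => hml.ne (by rw [h])
  have hroots := sub_mul_eq_of_recurrence hs
  set P := s 1 - m * s 0
  set Q := s 1 - l * s 0
  have hP : P ≠ 0 := sub_ne_zero.2 h1
  have hform : ∀ n, s n = l ^ n * ((P - Q * (m / l) ^ n) / (l - m)) := fun n => by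
    rw [← mul_div_assoc, eq_div_iff hlm, mul_comm, hroots, div_pow]
    field_simp
  have hratio : ∀ n, s (n + 1) / s n =
      l * ((P - Q * (m / l) ^ (n + 1)) / (P - Q * (m / l) ^ n)) := fun n => by
    rw [hform n, hform (n + 1), pow_succ l, mul_assoc, mul_div_mul_left _ _ (pow_ne_zero n hl),
      mul_div_assoc, div_div_div_cancel_right₀ hlm]
  have hpow : Tendsto (fun n => P - Q * (m / l) ^ n) atTop (𝓝 P) := by
    have hlt : ‖m / l‖ < 1 := by rwa [norm_div, div_lt_one (norm_pos_iff.2 hl)]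
    simpa using ((tendsto_pow_atTop_nhds_zero_of_norm_lt_one hlt).const_mul Q).const_sub P
  have hlim : Tendsto (fun n => (P - Q * (m / l) ^ (n + 1)) / (P - Q * (m / l) ^ n)) atTop (𝓝 1) :=
    div_self hP ▸ (hpow.comp (tendsto_add_atTop_nat 1)).div hpow hP
  simpa only [hratio, mul_one] using hlim.const_mul l

theorem eq_pow_mul_of_recurrence_of_double_root {K : Type*} [Field K] {s : ℕ → K} {l : K}
    (hs : ∀ n, s (n + 2) = (l + l) * s (n + 1) - l * l * s n) (hl : l ≠ 0) (n : ℕ) :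
    s n = l ^ n * (s 0 + (s 1 / l - s 0) * n) := by
  induction n using Nat.twoStepInduction with
  | zero => simp
  | one => field_simp; push_cast; ring
  | more n ih₀ ih₁ => rw [hs, ih₀, ih₁]; push_cast; ring

theorem tendsto_ratio_of_recurrence_of_double_root {𝕜 : Type*} [RCLike 𝕜] {s : ℕ → 𝕜} {l : 𝕜}
    (hs : ∀ n, s (n + 2) = (l + l) * s (n + 1) - l * l * s n) (hl : l ≠ 0) (h0 : s 0 ≠ 0) :
    Tendsto (fun n => s (n + 1) / s n) atTop (𝓝 l) := by
  have hform := eq_pow_mul_of_recurrence_of_double_root hs hl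
  set k := s 1 / l - s 0
  have hratio : ∀ n, s (n + 1) / s n = l * ((s 0 + k + k * n) / (s 0 + k * n)) := fun n => by
    rw [hform n, hform (n + 1), pow_succ, mul_assoc, mul_div_mul_left _ _ (pow_ne_zero n hl),
      mul_div_assoc]
    push_cast
    ring_nf
  have hlim : Tendsto (fun n : ℕ => (s 0 + k + k * n) / (s 0 + k * n)) atTop (𝓝 1) := by
    rcases eq_or_ne k 0 with hk | hk
    · simp [hk, h0]
    · simpa [hk] using tendsto_add_mul_div_add_mul_atTop_nhds (s 0 + k) (s 0) k hk
  simpa only [hratio, mul_one] using hlim.const_mul l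

end LinearRecurrence

section NonnegMatrix

open Matrix

theorem dotProduct_pow_mulVec_recurrence {R : Type*} [CommRing R]
    (B : Matrix (Fin 2) (Fin 2) R) (w v : Fin 2 → R) (n : ℕ) :
    w ⬝ᵥ B ^ (n + 2) *ᵥ v =
      B.trace * (w ⬝ᵥ B ^ (n + 1) *ᵥ v) - B.det * (w ⬝ᵥ B ^ n *ᵥ v) := by
  nontriviality R
  have hch : B ^ 2 = B.trace • B - B.det • 1 := by
    have h := B.aeval_self_charpoly
    simp only [charpoly_fin_two, map_add, map_sub, map_mul, map_pow, Polynomial.aeval_X,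
      Polynomial.aeval_C, Algebra.algebraMap_eq_smul_one, smul_one_mul] at h
    rw [← sub_eq_zero, ← h]
    abel
  have hpow : B ^ (n + 2) = B.trace • B ^ (n + 1) - B.det • B ^ n := by
    rw [pow_add, hch, mul_sub, mul_smul_comm, mul_smul_comm, mul_one, pow_succ]
  rw [hpow, sub_mulVec, smul_mulVec, smul_mulVec, dotProduct_sub, dotProduct_smul, dotProduct_smul,
    smul_eq_mul, smul_eq_mul]

variable {B : Matrix (Fin 2) (Fin 2) ℝ} {l m : ℝ} {v w : Fin 2 → ℝ}

theorem exists_eigenvalues_of_nonneg (hB : ∀ i j, 0 ≤ B i j) :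
    ∃ l m : ℝ, m ≤ l ∧ l + m = B.trace ∧ l * m = B.det := by
  have hdiscr : 0 ≤ B.discr := by
    rw [discr_fin_two, trace_fin_two, det_fin_two]
    nlinarith [sq_nonneg (B 0 0 - B 1 1), mul_nonneg (hB 0 1) (hB 1 0)]
  refine ⟨(B.trace + √B.discr) / 2, (B.trace - √B.discr) / 2, ?_, by ring, ?_⟩
  · linarith [Real.sqrt_nonneg B.discr]
  · linear_combination (-1 / 4) * Real.sq_sqrt hdiscr - B.discr_fin_two / 4

theorem le_diag_of_nonneg (hB : ∀ i j, 0 ≤ B i j) (hml : m ≤ l) (hsum : l + m = B.trace)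
    (hprod : l * m = B.det) (i : Fin 2) : m ≤ B i i := by
  rw [trace_fin_two] at hsum
  rw [det_fin_two] at hprod
  have hbc : 0 ≤ (B 0 0 - m) * (B 1 1 - m) := by
    have : (B 0 0 - m) * (B 1 1 - m) = B 0 1 * B 1 0 := by
      linear_combination m * hsum - hprod
    exact this ▸ mul_nonneg (hB 0 1) (hB 1 0)
  fin_cases i <;> simp <;> nlinarith

theorem mulVec_ne_smul_of_lt (hB : ∀ i j, 0 ≤ B i j) (htr : 0 < B.trace) (hml : m < l)
    (hsum : l + m = B.trace) (hprod : l * m = B.det) (hv : 0 ≤ v) (hv0 : v ≠ 0)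
    (hexit : ∀ i, v i = 0 → B i i ≠ 0 → ∃ j ≠ i, B i j ≠ 0) : B *ᵥ v ≠ m • v := by
  intro heig
  have hdiag := le_diag_of_nonneg hB hml.le hsum hprod
  have hterms : ∀ i j, i ≠ j → (B i i - m) * v i = 0 ∧ B i j * v j = 0 := fun i j hij => by
    have hi := congrFun heig i
    rw [← add_eq_zero_iff_of_nonneg (mul_nonneg (sub_nonneg.2 (hdiag i)) (hv i))
      (mul_nonneg (hB i j) (hv j))]
    fin_cases i <;> fin_cases j <;> simp_all [mulVec, dotProduct, Fin.sum_univ_two] <;> linarith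
  obtain ⟨i, hi⟩ := Function.ne_iff.1 hv0
  obtain ⟨j, hji⟩ := exists_ne i
  have hii : B i i = m :=
    sub_eq_zero.1 ((mul_eq_zero.1 (hterms i j hji.symm).1).resolve_right hi)
  have hBji : B j i = 0 := (mul_eq_zero.1 (hterms j i hji).2).resolve_right hi
  have hjj : B j j = l := by
    have : B i i + B j j = B.trace := by
      rw [trace_fin_two]; fin_cases i <;> fin_cases j <;> simp_all [add_comm]
    linarith
  by_cases hvj : v j = 0
  · obtain ⟨k, hkj, hk⟩ := hexit j hvj (by linarith)
    obtain rfl : k = i := by lia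
    exact hk hBji
  · have := sub_eq_zero.1 ((mul_eq_zero.1 (hterms j i hji).1).resolve_right hvj)
    linarith

theorem mul_dotProduct_lt_dotProduct_mulVec (hB : ∀ i j, 0 ≤ B i j) (htr : 0 < B.trace)
    (hml : m < l) (hsum : l + m = B.trace) (hprod : l * m = B.det) (hw : ∀ i, 0 < w i)
    (hv : 0 ≤ v) (hv0 : v ≠ 0) (hexit : ∀ i, v i = 0 → B i i ≠ 0 → ∃ j ≠ i, B i j ≠ 0) :
    m * (w ⬝ᵥ v) < w ⬝ᵥ B *ᵥ v := by
  have hle : ∀ i, (m • v) i ≤ (B *ᵥ v) i := fun i =>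
    calc m * v i ≤ B i i * v i :=
          mul_le_mul_of_nonneg_right (le_diag_of_nonneg hB hml.le hsum hprod i) (hv i)
      _ ≤ ∑ j, B i j * v j :=
          Finset.single_le_sum (fun j _ => mul_nonneg (hB i j) (hv j)) (Finset.mem_univ i)
  obtain ⟨i, hi⟩ := Function.ne_iff.1 (mulVec_ne_smul_of_lt hB htr hml hsum hprod hv hv0 hexit)
  rw [← smul_eq_mul, ← dotProduct_smul]
  exact Finset.sum_lt_sum (fun j _ => mul_le_mul_of_nonneg_left (hle j) (hw j).le)
    ⟨i, Finset.mem_univ i, mul_lt_mul_of_pos_left (lt_of_le_of_ne (hle i) hi.symm) (hw i)⟩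

theorem tendsto_ratio_dotProduct_pow_mulVec (hB : ∀ i j, 0 ≤ B i j) (htr : 0 < B.trace)
    (hml : m ≤ l) (hsum : l + m = B.trace) (hprod : l * m = B.det) (hw : ∀ i, 0 < w i)
    (hv : 0 ≤ v) (hv0 : v ≠ 0) (hexit : ∀ i, v i = 0 → B i i ≠ 0 → ∃ j ≠ i, B i j ≠ 0) :
    Tendsto (fun n => (w ⬝ᵥ B ^ (n + 1) *ᵥ v) / (w ⬝ᵥ B ^ n *ᵥ v)) atTop (𝓝 l) := by
  have hrec : ∀ n, w ⬝ᵥ B ^ (n + 2) *ᵥ v =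
      (l + m) * (w ⬝ᵥ B ^ (n + 1) *ᵥ v) - l * m * (w ⬝ᵥ B ^ n *ᵥ v) := fun n => by
    rw [hsum, hprod, dotProduct_pow_mulVec_recurrence]
  rcases hml.eq_or_lt with rfl | hlt
  · have hpos : 0 < w ⬝ᵥ v := by
      obtain ⟨i, hi⟩ := Function.ne_iff.1 hv0
      exact Finset.sum_pos' (fun j _ => mul_nonneg (hw j).le (hv j))
        ⟨i, Finset.mem_univ i, mul_pos (hw i) ((hv i).lt_of_ne hi.symm)⟩
    exact tendsto_ratio_of_recurrence_of_double_root (s := fun n => w ⬝ᵥ B ^ n *ᵥ v) hrec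
      (by linarith) (by simpa using hpos.ne')
  · have hnorm : ‖m‖ < ‖l‖ := by
      rw [Real.norm_eq_abs, Real.norm_eq_abs, abs_of_pos (show 0 < l by linarith), abs_lt]
      constructor <;> linarith
    exact tendsto_ratio_of_recurrence_of_norm_lt (s := fun n => w ⬝ᵥ B ^ n *ᵥ v) hrec hnorm
      (by simpa using
        (mul_dotProduct_lt_dotProduct_mulVec hB htr hlt hsum hprod hw hv hv0 hexit).ne')

theorem similar2_antidiagonal {b c α : ℝ} (hα : α ≠ 0) (hbc : α * α = b * c) :
    Similar2 !![0, b; c, 0] !![α, 0; 0, -α] := by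
  have hb : b ≠ 0 := fun h => hα (by simpa [h] using hbc)
  have hdet : IsUnit (!![b, b; α, -α]).det := by
    rw [det_fin_two_of, isUnit_iff_ne_zero]
    have := mul_ne_zero hb hα
    intro h
    exact this (by linarith)
  have hconj : !![0, b; c, 0] * !![b, b; α, -α] = !![b, b; α, -α] * !![α, 0; 0, -α] := by
    simp [mul_comm c, hbc]
  refine ⟨!![b, b; α, -α], hdet, ?_⟩
  rw [mul_assoc, hconj, ← mul_assoc, nonsing_inv_mul _ hdet, one_mul]

end NonnegMatrix

section MarkovShift

variable {α : Type*} {X : Set (ℕ → α)} {A : α → α → ℕ} {a b : α}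

/-- The one-sided shift of finite type with transition matrix `A`; only the entries equal to `1`
are allowed transitions. -/
def markovShift (A : α → α → ℕ) : Set (ℕ → α) := {x | ∀ n, A (x n) (x (n + 1)) = 1}

theorem appearsIn_singleton : AppearsIn X [a] ↔ ∃ x ∈ X, ∃ m, x m = a := by
  simp [AppearsIn]

theorem appearsIn_pair : AppearsIn X [a, b] ↔ ∃ x ∈ X, ∃ m, x m = a ∧ x (m + 1) = b := by
  simp [AppearsIn, Fin.forall_fin_two]

theorem appearsIn_pair_of_mem {x : ℕ → α} (hx : x ∈ X) (m : ℕ) : AppearsIn X [x m, x (m + 1)] :=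
  appearsIn_pair.2 ⟨x, hx, m, rfl, rfl⟩

theorem AppearsIn.singleton_of_pair (h : AppearsIn X [a, b]) : AppearsIn X [a] := by
  obtain ⟨x, hx, m, hm, -⟩ := appearsIn_pair.1 h
  exact appearsIn_singleton.2 ⟨x, hx, m, hm⟩

theorem transition_eq_one_of_appearsIn (h : AppearsIn (markovShift A) [a, b]) : A a b = 1 := by
  obtain ⟨x, hx, m, rfl, rfl⟩ := appearsIn_pair.1 h
  exact hx m

theorem appearsIn_self_iff : AppearsIn (markovShift A) [a, a] ↔ A a a = 1 :=
  ⟨transition_eq_one_of_appearsIn,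
    fun h => appearsIn_pair_of_mem (x := fun _ => a) (fun _ => h) 0⟩

theorem drop_mem_markovShift {x : ℕ → α} (hx : x ∈ markovShift A) (m : ℕ) :
    (fun k => x (m + k)) ∈ markovShift A := fun k => hx (m + k)

theorem cons_mem_markovShift {x : ℕ → α} (hx : x ∈ markovShift A) (ha : A a (x 0) = 1) :
    (fun k => Nat.casesOn k a x : ℕ → α) ∈ markovShift A
  | 0 => ha
  | n + 1 => hx n

theorem exists_mem_markovShift_iff {n : ℕ} {u : Fin (n + 2) → α} :
    (∃ x ∈ markovShift A, ∀ i : Fin (n + 2), x i = u i) ↔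
      ∀ i : Fin (n + 1), AppearsIn (markovShift A) [u i.castSucc, u i.succ] := by
  constructor
  · rintro ⟨x, hx, hxu⟩ i
    simpa [← hxu] using appearsIn_pair_of_mem hx i
  · intro hpairs
    induction n with
    | zero =>
      obtain ⟨x, hx, m, h0, h1⟩ := appearsIn_pair.1 (hpairs 0)
      exact ⟨fun k => x (m + k), drop_mem_markovShift hx m, Fin.forall_fin_two.2 ⟨h0, h1⟩⟩
    | succ n ih =>
      obtain ⟨x, hx, hxu⟩ := ih (u := Fin.tail u) fun i => hpairs i.succ
      have h0 : A (u 0) (x 0) = 1 :=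
        (hxu 0).symm ▸ transition_eq_one_of_appearsIn (hpairs 0)
      exact ⟨_, cons_mem_markovShift hx h0, Fin.forall_fin_succ.2 ⟨rfl, hxu⟩⟩

theorem exists_appearsIn_pair_mem_notMem (hX : IrreducibleShift X) {S : Set α}
    (ha : AppearsIn X [a]) (haS : a ∈ S) (hb : AppearsIn X [b]) (hbS : b ∉ S) :
    ∃ c ∈ S, ∃ d ∉ S, AppearsIn X [c, d] := by
  obtain ⟨w, x, hx, m, hxw⟩ := hX [a] [b] ha hb
  have hstart : x m = a := by simpa using hxw ⟨0, by simp⟩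
  have hend : x (m + (w.length + 1)) = b := by simpa using hxw ⟨w.length + 1, by simp⟩
  by_contra! hstay
  have hmem : ∀ k, x (m + k) ∈ S := fun k => by
    induction k with
    | zero => rwa [add_zero, hstart]
    | succ k ih =>
      by_contra hout
      exact hstay _ ih _ hout (appearsIn_pair_of_mem hx (m + k))
  exact hbS (hend ▸ hmem _)

end MarkovShift

section TransferMatrix

open Matrix

/-- The weighted adjacency matrix of the `2`-blocks of `X`. It can differ from `MC A F` when a
transition allowed by `A` leads to a dead end, and then it is this matrix that counts the blocks
of `X`. -/
def blockMatrix {α : Type*} (X : Set (ℕ → α)) (F : α → α → ℝ) : Matrix α α ℝ :=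
  Matrix.of fun i j => if AppearsIn X [i, j] then Real.exp (F i j) else 0

/-- The total weight of the `(n + 1)`-words that start at `i` and project to `y 0, …, y n`,
where a word has weight the product of the `N`-entries along its transitions. -/
def fiberSum {α β R : Type*} [Fintype α] [DecidableEq β] [CommSemiring R] (N : Matrix α α R)
    (π : α → β) : ℕ → (ℕ → β) → α → R
  | 0, y, i => if π i = y 0 then 1 else 0
  | n + 1, y, i => if π i = y 0 then (N *ᵥ fiberSum N π n (shift y)) i else 0

section FiberSum

variable {α β R : Type*} [Fintype α] [DecidableEq β] [CommSemiring R] {N : Matrix α α R}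
  {π : α → β}

theorem fiberSum_eq_zero {n : ℕ} {y : ℕ → β} {i : α} (h : π i ≠ y 0) :
    fiberSum N π n y i = 0 := by
  cases n <;> exact if_neg h

theorem fiberSum_succ {n : ℕ} {y : ℕ → β} {i : α} (h : π i = y 0) :
    fiberSum N π (n + 1) y i = ∑ j, N i j * fiberSum N π n (shift y) j :=
  if_pos h

theorem sum_cons_words_eq_fiberSum (n : ℕ) (y : ℕ → β) (i : α) :
    (∑ u : Fin n → α, if ∀ k : Fin (n + 1), π ((Fin.cons i u : Fin (n + 1) → α) k) = y k then
      ∏ k : Fin n, N ((Fin.cons i u : Fin (n + 1) → α) k.castSucc) (u k) else 0) =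
      fiberSum N π n y i := by
  induction n generalizing y i with
  | zero => simp [fiberSum]
  | succ n ih =>
    by_cases hi : π i = y 0
    · rw [fiberSum_succ hi, ← (Fin.consEquiv fun _ => α).sum_comp, Fintype.sum_prod_type]
      refine Finset.sum_congr rfl fun j _ => ?_
      rw [← ih, Finset.mul_sum]
      refine Finset.sum_congr rfl fun u _ => ?_
      simp only [mul_ite, mul_zero]
      congr 1
      · simp [Fin.forall_fin_succ, Fin.consEquiv, hi, shift]
      · rw [Fin.prod_univ_succ]
        rfl
    · rw [fiberSum_eq_zero hi]
      exact Finset.sum_eq_zero fun u _ => if_neg fun h => hi (by simpa using h 0)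

theorem sum_words_eq_sum_fiberSum (n : ℕ) (y : ℕ → β) :
    (∑ u : Fin (n + 1) → α, if ∀ k : Fin (n + 1), π (u k) = y k then
      ∏ k : Fin n, N (u k.castSucc) (u k.succ) else 0) = ∑ i, fiberSum N π n y i := by
  rw [← (Fin.consEquiv fun _ => α).sum_comp, Fintype.sum_prod_type]
  refine Finset.sum_congr rfl fun i _ => ?_
  rw [← sum_cons_words_eq_fiberSum]
  rfl

end FiberSum

theorem prod_blockMatrix {α : Type*} {A : α → α → ℕ} {F : α → α → ℝ} {n : ℕ}
    (u : Fin (n + 2) → α) :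
    ∏ k : Fin (n + 1), blockMatrix (markovShift A) F (u k.castSucc) (u k.succ) =
      if ∃ x ∈ markovShift A, ∀ i : Fin (n + 2), x i = u i then
        Real.exp (∑ k : Fin (n + 1), F (u k.castSucc) (u k.succ)) else 0 := by
  simp only [blockMatrix, Matrix.of_apply, exists_mem_markovShift_iff]
  rw [Fintype.prod_ite_zero, Real.exp_sum]
  congr

theorem hseqC_eq_sum_fiberSum {l : ℕ} (A : Fin l → Fin l → ℕ) (πs : Fin l → Fin 2)
    (F : Fin l → Fin l → ℝ) (f : (ℕ → Fin l) → ℝ) (n : ℕ) (y : ℕ → Fin 2) :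
    hseqC (markovShift A) πs F f (n + 2) y =
      ∑ i, fiberSum (blockMatrix (markovShift A) F) πs (n + 1) y i := by
  rw [← sum_words_eq_sum_fiberSum, hseqC, if_neg (by lia)]
  refine Finset.sum_congr rfl fun u _ => ?_
  have hexponent : (∑ i : Fin (n + 2),
      if h : (i + 1 : ℕ) < n + 2 then F (u i) (u ⟨i + 1, h⟩) else 0) =
        ∑ k : Fin (n + 1), F (u k.castSucc) (u k.succ) := by
    rw [Fin.sum_univ_castSucc, dif_neg (by simp), add_zero]
    exact Finset.sum_congr rfl fun k _ => dif_pos (Nat.succ_lt_succ k.isLt)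
  rw [prod_blockMatrix, hexponent, ← ite_and]
  exact if_congr and_comm rfl rfl

variable {k : ℕ} {R : Type*} [CommSemiring R] (N : Matrix (Fin (k + 1)) (Fin (k + 1)) R)

theorem fiberSum_projC_zero {n : ℕ} {y : ℕ → Fin 2} (hy : y 0 = 1) :
    fiberSum N projC n y 0 = 0 :=
  fiberSum_eq_zero (by simp [projC, hy])

theorem sum_fiberSum_projC {n : ℕ} {y : ℕ → Fin 2} (hy : y 0 = 1) :
    ∑ i, fiberSum N projC n y i = 1 ⬝ᵥ fun i : Fin k => fiberSum N projC n y i.succ := by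
  rw [Fin.sum_univ_succ, fiberSum_projC_zero N hy, zero_add, one_dotProduct]

theorem fiberSum_projC_succ {n : ℕ} {y : ℕ → Fin 2} (h0 : y 0 = 1) (h1 : y 1 = 1) :
    (fun i : Fin k => fiberSum N projC (n + 1) y i.succ) =
      N.submatrix Fin.succ Fin.succ *ᵥ fun i => fiberSum N projC n (shift y) i.succ := by
  ext i
  rw [fiberSum_succ (by simp [projC, h0]), Fin.sum_univ_succ, fiberSum_projC_zero N (by simpa),
    mul_zero, zero_add]
  rfl

theorem fiberSum_projC_ones (n : ℕ) :
    (fun i : Fin k => fiberSum N projC n (fun _ => 1) i.succ) =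
      N.submatrix Fin.succ Fin.succ ^ n *ᵥ 1 := by
  induction n with
  | zero => ext i; simp [fiberSum, projC]
  | succ n ih => rw [fiberSum_projC_succ N rfl rfl, pow_succ', ← mulVec_mulVec, ← ih]; rfl

theorem fiberSum_projC_ones_zero (n : ℕ) :
    (fun i : Fin k => fiberSum N projC (n + 1) (fun j => if j < n + 1 then 1 else 0) i.succ) =
      N.submatrix Fin.succ Fin.succ ^ n *ᵥ fun i => N i.succ 0 := by
  induction n with
  | zero =>
    rw [pow_zero, one_mulVec]
    ext i
    simp [fiberSum, projC, shift, mulVec, dotProduct]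
  | succ n ih =>
    have hshift : shift (fun j => if j < n + 1 + 1 then (1 : Fin 2) else 0) =
        fun j => if j < n + 1 then 1 else 0 := by
      ext j; simp [shift]
    rw [fiberSum_projC_succ N (by simp) (by simp), hshift, ih, mulVec_mulVec, pow_succ']

variable (A : Fin (k + 1) → Fin (k + 1) → ℕ) (F : Fin (k + 1) → Fin (k + 1) → ℝ)
  (f : (ℕ → Fin (k + 1)) → ℝ) (n : ℕ)

theorem hseqC_ones :
    hseqC (markovShift A) projC F f (n + 2) (fun _ => 1) =
      1 ⬝ᵥ (blockMatrix (markovShift A) F).submatrix Fin.succ Fin.succ ^ (n + 1) *ᵥ 1 := by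
  rw [hseqC_eq_sum_fiberSum, sum_fiberSum_projC _ rfl, fiberSum_projC_ones]

theorem hseqC_ones_zero :
    hseqC (markovShift A) projC F f (n + 2) (fun i => if i < n + 1 then 1 else 0) =
      1 ⬝ᵥ (blockMatrix (markovShift A) F).submatrix Fin.succ Fin.succ ^ n *ᵥ
        fun i => blockMatrix (markovShift A) F i.succ 0 := by
  rw [hseqC_eq_sum_fiberSum, sum_fiberSum_projC _ (by simp), fiberSum_projC_ones_zero]

end TransferMatrix

section BlockMatrix

variable {α : Type*} {X : Set (ℕ → α)} {F : α → α → ℝ}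

theorem blockMatrix_nonneg (i j : α) : 0 ≤ blockMatrix X F i j := by
  simp only [blockMatrix, Matrix.of_apply]
  positivity

theorem blockMatrix_ne_zero_iff {i j : α} : blockMatrix X F i j ≠ 0 ↔ AppearsIn X [i, j] := by
  simp [blockMatrix]

variable {k : ℕ} {X : Set (ℕ → Fin (k + 1))} {F : Fin (k + 1) → Fin (k + 1) → ℝ}

theorem blockMatrix_column_zero_ne_zero (hX : IrreducibleShift X) {a : Fin (k + 1)} (ha : a ≠ 0)
    (hXa : AppearsIn X [a]) (hX0 : AppearsIn X [0]) :
    (fun i : Fin k => blockMatrix X F i.succ 0) ≠ 0 := by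
  obtain ⟨c, hc, d, hd, hcd⟩ :=
    exists_appearsIn_pair_mem_notMem hX (S := {0}ᶜ) hXa ha hX0 (by simp)
  obtain rfl : d = 0 := by simpa using hd
  obtain ⟨i, rfl⟩ := Fin.exists_succ_eq.2 hc
  exact Function.ne_iff.2 ⟨i, blockMatrix_ne_zero_iff.2 hcd⟩

theorem exists_blockMatrix_succ_ne_zero (hX : IrreducibleShift X) (hX0 : AppearsIn X [0])
    {i : Fin k} (hcol : blockMatrix X F i.succ 0 = 0) (hdiag : blockMatrix X F i.succ i.succ ≠ 0) :
    ∃ j ≠ i, blockMatrix X F i.succ j.succ ≠ 0 := by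
  obtain ⟨c, rfl, d, hd, hcd⟩ :=
    exists_appearsIn_pair_mem_notMem hX (S := {i.succ})
      (blockMatrix_ne_zero_iff.1 hdiag).singleton_of_pair rfl hX0 (Fin.succ_ne_zero i).symm
  rw [← blockMatrix_ne_zero_iff (F := F)] at hcd
  obtain ⟨j, rfl⟩ := Fin.exists_succ_eq.2 fun h : d = 0 => hcd (h ▸ hcol)
  exact ⟨j, fun h => hd (h ▸ rfl), hcd⟩

end BlockMatrix

section ThreeSymbols

variable {A : Fin 3 → Fin 3 → ℕ} {F : Fin 3 → Fin 3 → ℝ}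

theorem appearsIn_one_two_and_two_one_of_no_loops {x : ℕ → Fin 3} (hx : x ∈ markovShift A)
    (hx0 : ∀ n, x n ≠ 0) (h1 : A 1 1 ≠ 1) (h2 : A 2 2 ≠ 1) :
    AppearsIn (markovShift A) [1, 2] ∧ AppearsIn (markovShift A) [2, 1] := by
  have hsymbol : ∀ n, x n = 1 ∨ x n = 2 := fun n => by have := hx0 n; lia
  have hne : ∀ n, x n ≠ x (n + 1) := fun n h => by
    have hloop : A (x n) (x n) = 1 := (congrArg (A (x n)) h).trans (hx n)
    rcases hsymbol n with hn | hn <;> rw [hn] at hloop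
    exacts [h1 hloop, h2 hloop]
  have h01 := appearsIn_pair_of_mem hx 0
  have h12 := appearsIn_pair_of_mem hx 1
  have hne0 := hne 0
  have hne1 := hne 1
  rcases hsymbol 0 with e0 | e0 <;> rcases hsymbol 1 with e1 | e1 <;>
    rcases hsymbol 2 with e2 | e2 <;> simp_all

theorem trace_blockMatrix_pos (hA01 : ∀ i j, A i j = 0 ∨ A i j = 1)
    (hones : ∃ x ∈ markovShift A, ∀ n, x n ≠ 0)
    (hnsim : ∀ α : ℝ, α ≠ 0 →
      ¬ Similar2 (Matrix.of fun i j : Fin 2 => MC A F i.succ j.succ) !![α, 0; 0, -α]) :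
    0 < ((blockMatrix (markovShift A) F).submatrix Fin.succ Fin.succ :
      Matrix (Fin 2) (Fin 2) ℝ).trace := by
  obtain ⟨x, hx, hx0⟩ := hones
  by_contra htr
  have hno_loop : ∀ i : Fin 2, A i.succ i.succ ≠ 1 := fun i hi => by
    have hzero := (Finset.sum_eq_zero_iff_of_nonneg fun i _ => blockMatrix_nonneg _ _).1
      (le_antisymm (not_lt.1 htr) (Finset.sum_nonneg fun i _ => blockMatrix_nonneg _ _))
      i (Finset.mem_univ i)
    exact blockMatrix_ne_zero_iff.2 (appearsIn_self_iff.2 hi) hzero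
  obtain ⟨h12, h21⟩ :=
    appearsIn_one_two_and_two_one_of_no_loops hx hx0 (hno_loop 0) (hno_loop 1)
  have hM : (Matrix.of fun i j : Fin 2 => MC A F i.succ j.succ) =
      !![0, Real.exp (F 1 2); Real.exp (F 2 1), 0] := by
    have hA11 : A 1 1 = 0 := (hA01 1 1).resolve_right (hno_loop 0)
    have hA22 : A 2 2 = 0 := (hA01 2 2).resolve_right (hno_loop 1)
    have hA12 : A 1 2 = 1 := transition_eq_one_of_appearsIn h12
    have hA21 : A 2 1 = 1 := transition_eq_one_of_appearsIn h21
    ext i j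
    fin_cases i <;> fin_cases j <;> simp [MC, hA11, hA22, hA12, hA21]
  have hpos : 0 < Real.exp (F 1 2) * Real.exp (F 2 1) := by positivity
  exact hnsim _ (Real.sqrt_ne_zero'.2 hpos)
    (hM ▸ similar2_antidiagonal (Real.sqrt_ne_zero'.2 hpos) (Real.mul_self_sqrt hpos.le))

end ThreeSymbols

section Factor

variable {k : ℕ} {X : Set (ℕ → Fin (k + 1))} {Y : Set (ℕ → Fin 2)}

theorem projC_eq_zero_iff {a : Fin (k + 1)} : projC a = 0 ↔ a = 0 := by
  by_cases h : a = 0 <;> simp [projC, h]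

theorem exists_mem_projC_comp_eq
    (hY : Y = Set.univ ∨ Y = {y | ∀ n : ℕ, ¬(y n = 0 ∧ y (n + 1) = 0)})
    (hsurj : (fun x => projC ∘ x) '' X = Y) {y : ℕ → Fin 2}
    (hy : ∀ n : ℕ, ¬(y n = 0 ∧ y (n + 1) = 0)) : ∃ x ∈ X, projC ∘ x = y := by
  have : y ∈ Y := by
    rcases hY with rfl | rfl
    exacts [Set.mem_univ y, hy]
  rwa [← hsurj] at this

theorem exists_mem_ne_zero
    (hY : Y = Set.univ ∨ Y = {y | ∀ n : ℕ, ¬(y n = 0 ∧ y (n + 1) = 0)})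
    (hsurj : (fun x => projC ∘ x) '' X = Y) : ∃ x ∈ X, ∀ n, x n ≠ 0 := by
  obtain ⟨x, hx, hxy⟩ := exists_mem_projC_comp_eq hY hsurj (y := fun _ => 1) (by simp)
  exact ⟨x, hx, fun n h => by simpa [projC_eq_zero_iff.2 h] using congrFun hxy n⟩

theorem appearsIn_zero
    (hY : Y = Set.univ ∨ Y = {y | ∀ n : ℕ, ¬(y n = 0 ∧ y (n + 1) = 0)})
    (hsurj : (fun x => projC ∘ x) '' X = Y) : AppearsIn X [0] := by
  obtain ⟨x, hx, hxy⟩ := exists_mem_projC_comp_eq hY hsurj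
    (y := fun n => if n = 0 then 0 else 1) (by simp)
  exact appearsIn_singleton.2 ⟨x, hx, 0, projC_eq_zero_iff.1 (by simpa using congrFun hxy 0)⟩

end Factor

theorem stmt_17_general (A : Fin 3 → Fin 3 → ℕ) (hA01 : ∀ i j, A i j = 0 ∨ A i j = 1)
    (hirr : IrreducibleShift (markovShift A)) (hones : ∃ x ∈ markovShift A, ∀ n, x n ≠ 0)
    (hzero : AppearsIn (markovShift A) [0]) (F : Fin 3 → Fin 3 → ℝ)
    (hnsim : ∀ α : ℝ, α ≠ 0 →
      ¬ Similar2 (Matrix.of fun i j : Fin 2 => MC A F i.succ j.succ) !![α, 0; 0, -α]) :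
    ∃ L : ℝ,
      Tendsto (fun n : ℕ =>
          hseqC (markovShift A) projC F (fun x => F (x 0) (x 1)) (n + 3) (fun _ => 1) /
            hseqC (markovShift A) projC F (fun x => F (x 0) (x 1)) (n + 2) (fun _ => 1))
        atTop (𝓝 L) ∧
      Tendsto (fun n : ℕ =>
          hseqC (markovShift A) projC F (fun x => F (x 0) (x 1)) (n + 3)
              (fun i => if i < n + 2 then 1 else 0) /
            hseqC (markovShift A) projC F (fun x => F (x 0) (x 1)) (n + 2)
              (fun i => if i < n + 1 then 1 else 0))
        atTop (𝓝 L) := by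
  have htr := trace_blockMatrix_pos hA01 hones hnsim
  set B := (blockMatrix (markovShift A) F).submatrix Fin.succ Fin.succ with hB
  have hB0 : ∀ i j : Fin 2, 0 ≤ B i j := fun _ _ => blockMatrix_nonneg _ _
  obtain ⟨x, hx, hx0⟩ := hones
  have hcol := blockMatrix_column_zero_ne_zero (F := F) hirr (hx0 0)
    (appearsIn_singleton.2 ⟨x, hx, 0, rfl⟩) hzero
  obtain ⟨l, m, hml, hsum, hprod⟩ := exists_eigenvalues_of_nonneg hB0
  refine ⟨l, ?_, ?_⟩
  · simp_rw [fun n => hseqC_ones A F (fun x => F (x 0) (x 1)) (n + 1), hseqC_ones, ← hB]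
    exact (tendsto_ratio_dotProduct_pow_mulVec hB0 htr hml hsum hprod (fun _ => one_pos)
      zero_le_one one_ne_zero fun _ h => absurd h one_ne_zero).comp (tendsto_add_atTop_nat 1)
  · simp_rw [fun n => hseqC_ones_zero A F (fun x => F (x 0) (x 1)) (n + 1), hseqC_ones_zero, ← hB]
    exact tendsto_ratio_dotProduct_pow_mulVec hB0 htr hml hsum hprod (fun _ => one_pos)
      (fun _ => blockMatrix_nonneg _ _) hcol
      fun _ => exists_blockMatrix_succ_ne_zero hirr hzero

/-- Lemma `conti2`: under Setting (C), if `𝓗 = {log h_n}` is weakly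
almost additive and `M_{22}|_{π^{-1}(22)}` is not similar over `ℝ` to `diag(α, −α)` for
any `α ≠ 0`, then `lim h[2^{n+2}]/h[2^{n+1}]` and `lim h[2^{n+2}1]/h[2^{n+1}1]` both
exist and are equal (continuity of `ĥ` at `2^∞`). (Symbols `1,2,3` of the paper are
`0,1,2` here, and symbols `1,2` of `Y` are `0,1`.) -/
theorem stmt_17
    (A : Fin 3 → Fin 3 → ℕ) (hA01 : ∀ i j, A i j = 0 ∨ A i j = 1)
    (X : Set (ℕ → Fin 3)) (hXdef : X = {x | ∀ n : ℕ, A (x n) (x (n + 1)) = 1})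
    (hXirr : IrreducibleShift X)
    (Y : Set (ℕ → Fin 2))
    (hYdef : Y = Set.univ ∨ Y = {y | ∀ n : ℕ, ¬(y n = 0 ∧ y (n + 1) = 0)})
    (hYirr : IrreducibleShift Y)
    (hsurj : (fun x => (projC (l := 3)) ∘ x) '' X = Y)
    (F : Fin 3 → Fin 3 → ℝ) (f : (ℕ → Fin 3) → ℝ)
    (hf : ∀ x : ℕ → Fin 3, f x = F (x 0) (x 1))
    (hWAA : WeakAAOn Y (hseqC X projC F f))
    (hnsim : ∀ α : ℝ, α ≠ 0 →
      ¬ Similar2 (Matrix.of fun i j : Fin 2 => MC A F i.succ j.succ) !![α, 0; 0, -α]) :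
    ∃ L : ℝ,
      Tendsto (fun n : ℕ =>
          hseqC X projC F f (n + 3) (fun _ => 1) /
            hseqC X projC F f (n + 2) (fun _ => 1)) atTop (𝓝 L) ∧
      Tendsto (fun n : ℕ =>
          hseqC X projC F f (n + 3) (fun i => if i < n + 2 then 1 else 0) /
            hseqC X projC F f (n + 2) (fun i => if i < n + 1 then 1 else 0)) atTop
        (𝓝 L) := by
  obtain rfl : f = fun x => F (x 0) (x 1) := funext hf
  subst hXdef
  exact stmt_17_general A hA01 hXirr (exists_mem_ne_zero hYdef hsurj)
    (appearsIn_zero hYdef hsurj) F hnsim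
end
end

section
/- Let π : X → Y be a one-block factor map, where X is a topologically mixing one-sided shift of finite type and Y is a subshift, and let f be a continuous real-valued function on X that admits a unique invariant Gibbs measure μ on X. If π is fiber-wise sub-positive mixing, then the sequence 𝓖 = {log g_n} associated to the relative pressure function P(σ_X, π, f) is almost additive on Y. -/
open MeasureTheory Filter Topology

noncomputable section

open scoped Classical

/-- Fiber-wise sub-positive mixing for a one-block factor map (Definition
`subp`), with block length `k + 1 ≥ 1`. -/
def FiberMixing {kX kY : ℕ} (X : Set (ℕ → Fin kX)) (Y : Set (ℕ → Fin kY))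
    (πs : Fin kX → Fin kY) : Prop :=
  ∃ k : ℕ, ∀ w : Fin (k + 1) → Fin kY, (∃ y ∈ Y, ∀ i : Fin (k + 1), y ↑i = w i) →
    ∀ u v : Fin (k + 1) → Fin kX,
      (∃ x ∈ X, ∀ i : Fin (k + 1), x ↑i = u i) →
      (∃ x ∈ X, ∀ i : Fin (k + 1), x ↑i = v i) →
      (∀ i : Fin (k + 1), πs (u i) = w i) → (∀ i : Fin (k + 1), πs (v i) = w i) →
      ∃ a : Fin (k + 1) → Fin kX, (∃ x ∈ X, ∀ i : Fin (k + 1), x ↑i = a i) ∧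
        a 0 = u 0 ∧ a (Fin.last k) = v (Fin.last k) ∧
        ∀ i : Fin (k + 1), πs (a i) = w i

/-!
Everything rests on the Bowen property: `S_n f` varies by at most a constant `L` over every
`n`-cylinder, which is what a Gibbs measure forces. Cutting an `(n + m)`-block at `n` gives
`g_{n+m}(y) ≤ g_n(y) g_m(σⁿ y)`. Conversely, given an `n`-block and an `m`-block over consecutive
pieces of `y`, fiber-wise mixing lets one alter at most `k` symbols on each side of the seam so that
they join to a block of `X` over the same piece of `y`. This changes the Birkhoff sum by a bounded
amount, and at most `|α| ^ (2k)` pairs of blocks lead to the same joined block.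
-/

section Shift

variable {α : Type*}

theorem shift_iterate_apply (x : ℕ → α) (n i : ℕ) : (shift^[n] x) i = x (n + i) := by
  induction n generalizing i with
  | zero => simp
  | succ n ih =>
    rw [Function.iterate_succ_apply', shift, ih]
    congr 1
    omega

theorem birk_add (f : (ℕ → α) → ℝ) (m n : ℕ) (x : ℕ → α) :
    birk f (m + n) x = birk f m x + birk f n (shift^[m] x) :=
  birkhoffSum_add shift f m n x

theorem cyl_eq_of_mem {X : Set (ℕ → α)} {x z : ℕ → α} {n : ℕ} (hz : z ∈ cyl X x n) :
    cyl X z n = cyl X x n := by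
  ext w
  exact and_congr_right fun _ => forall₂_congr fun i hi => by rw [hz.2 i hi]

end Shift

section TransitionShift

variable {α β : Type*} {R : α → α → Prop} {π : α → β} {k : ℕ}

/-- The one-step shift whose allowed transitions are given by the relation `R`; the shift of finite
type `X_A` is the case `R i j ↔ A i j = 1`. -/
def transitionShift (R : α → α → Prop) : Set (ℕ → α) :=
  {x | ∀ n, R (x n) (x (n + 1))}

theorem mapsTo_shift_transitionShift :
    Set.MapsTo shift (transitionShift R) (transitionShift R) :=
  fun _ hx n => hx (n + 1)

theorem exists_splice {a b : ℕ → α} (ha : a ∈ transitionShift R) (hb : b ∈ transitionShift R)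
    {s t : ℕ} (hab : a s = b t) :
    ∃ z ∈ transitionShift R, (∀ i ≤ s, z i = a i) ∧ ∀ i, z (s + i) = b (t + i) := by
  have left_eq : ∀ i ≤ s, (if i < s then a i else b (t + (i - s))) = a i := by
    intro i hi
    rcases hi.lt_or_eq with hlt | rfl
    · rw [if_pos hlt]
    · simp [hab]
  have right_eq : ∀ i, (if s + i < s then a (s + i) else b (t + (s + i - s))) = b (t + i) := by
    intro i
    simp
  refine ⟨fun i => if i < s then a i else b (t + (i - s)), fun i => ?_, left_eq, right_eq⟩
  rcases lt_or_ge i s with his | his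
  · simpa only [left_eq i his.le, left_eq (i + 1) his] using ha i
  · obtain ⟨j, rfl⟩ := Nat.exists_eq_add_of_le his
    simpa only [add_assoc, right_eq] using hb (t + j)

/-- Fiber-wise sub-positive mixing with block length `k + 1`, phrased with points of `X` in place of
blocks: the symbols `u 0` and `v k` can be joined inside the fiber. -/
def FiberMixingAt (X : Set (ℕ → α)) (π : α → β) (k : ℕ) : Prop :=
  ∀ u ∈ X, ∀ v ∈ X, (∀ i ≤ k, π (u i) = π (v i)) →
    ∃ a ∈ X, a 0 = u 0 ∧ a k = v k ∧ ∀ i ≤ k, π (a i) = π (u i)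

theorem FiberMixingAt.exists_bridge (hk : FiberMixingAt (transitionShift R) π k) {a b : ℕ → α}
    (ha : a ∈ transitionShift R) (hb : b ∈ transitionShift R) {s t : ℕ}
    (hab : ∀ i ≤ k, π (a (s + i)) = π (b (t + i))) :
    ∃ q ∈ transitionShift R, (∀ i ≤ s, q i = a i) ∧ (∀ i, k ≤ i → q (s + i) = b (t + i)) ∧
      ∀ i ≤ s + k, π (q i) = π (a i) := by
  obtain ⟨c, hc, hc_start, hc_end, hc_fiber⟩ := hk _ (mapsTo_shift_transitionShift.iterate s ha) _
    (mapsTo_shift_transitionShift.iterate t hb) (by simpa only [shift_iterate_apply] using hab)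
  simp only [shift_iterate_apply, add_zero] at hc_start hc_end hc_fiber
  obtain ⟨z, hz, hza, hzc⟩ := exists_splice ha hc hc_start.symm
  simp only [zero_add] at hzc
  obtain ⟨q, hq, hqz, hqb⟩ := exists_splice hz hb ((hzc k).trans hc_end)
  refine ⟨q, hq, fun i hi => by rw [hqz i (by omega), hza i hi], fun i hi => ?_, fun i hi => ?_⟩
  · obtain ⟨j, rfl⟩ := Nat.exists_eq_add_of_le hi
    rw [← add_assoc, hqb, add_assoc]
  · rw [hqz i hi]
    rcases le_total i s with his | his
    · rw [hza i his]
    · obtain ⟨j, rfl⟩ := Nat.exists_eq_add_of_le his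
      rw [hzc, hc_fiber j (by omega)]

theorem FiberMixingAt.exists_follow_left (hk : FiberMixingAt (transitionShift R) π k)
    {p x : ℕ → α} (hp : p ∈ transitionShift R) (hx : x ∈ transitionShift R) {n : ℕ}
    (hpx : ∀ i < n, π (p i) = π (x i)) :
    ∃ q ∈ transitionShift R, (∀ i, i + k < n → q i = p i) ∧ ∀ i, π (q i) = π (x i) := by
  rcases le_or_gt n k with hn | hn
  · exact ⟨x, hx, fun i hi => by omega, fun _ => rfl⟩
  obtain ⟨s, rfl⟩ : ∃ s, n = s + k + 1 := ⟨n - (k + 1), by omega⟩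
  obtain ⟨q, hq, hqp, hqx, hfiber⟩ :=
    hk.exists_bridge hp hx (s := s) (t := s) fun i hi => hpx _ (by omega)
  refine ⟨q, hq, fun i hi => hqp i (by omega), fun i => ?_⟩
  rcases le_total i (s + k) with hi | hi
  · rw [hfiber i hi, hpx i (by omega)]
  · obtain ⟨j, rfl⟩ := Nat.exists_eq_add_of_le hi
    rw [add_assoc, hqx _ (by omega)]

theorem FiberMixingAt.exists_follow_right (hk : FiberMixingAt (transitionShift R) π k)
    {x r : ℕ → α} (hx : x ∈ transitionShift R) (hr : r ∈ transitionShift R) {n m : ℕ}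
    (hrx : ∀ i < m, π (r i) = π (x (n + i))) :
    ∃ q ∈ transitionShift R, (∀ i < n, q i = x i) ∧ (∀ i < m, k ≤ i → q (n + i) = r i) ∧
      ∀ i < n + m, π (q i) = π (x i) := by
  rcases le_or_gt m k with hm | hm
  · exact ⟨x, hx, fun _ _ => rfl, fun i hi hki => by omega, fun _ _ => rfl⟩
  obtain ⟨q, hq, hqx, hqr, hfiber⟩ := hk.exists_bridge hx hr (s := n) (t := 0)
    fun i hi => by rw [zero_add, hrx i (by omega)]
  simp only [zero_add] at hqr
  refine ⟨q, hq, fun i hi => hqx i hi.le, fun i _ => hqr i, fun i hi => ?_⟩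
  rcases le_total i (n + k) with hik | hik
  · exact hfiber i hik
  · obtain ⟨j, rfl⟩ := Nat.exists_eq_add_of_le hik
    rw [add_assoc, hqr _ (by omega), hrx _ (by omega)]

theorem FiberMixingAt.exists_join (hk : FiberMixingAt (transitionShift R) π k) {p r x : ℕ → α}
    (hp : p ∈ transitionShift R) (hr : r ∈ transitionShift R) (hx : x ∈ transitionShift R)
    {n m : ℕ} (hpx : ∀ i < n, π (p i) = π (x i)) (hrx : ∀ i < m, π (r i) = π (x (n + i))) :
    ∃ q ∈ transitionShift R, (∀ i, i + k < n → q i = p i) ∧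
      (∀ i < m, k ≤ i → q (n + i) = r i) ∧ ∀ i < n + m, π (q i) = π (x i) := by
  obtain ⟨q₁, hq₁, hq₁p, hq₁x⟩ := hk.exists_follow_left hp hx hpx
  obtain ⟨q, hq, hqq₁, hqr, hfiber⟩ :=
    hk.exists_follow_right hq₁ hr fun i hi => (hrx i hi).trans (hq₁x _).symm
  exact ⟨q, hq, fun i hi => (hqq₁ i (by omega)).trans (hq₁p i hi), hqr,
    fun i hi => (hfiber i hi).trans (hq₁x i)⟩

end TransitionShift

theorem FiberMixing.exists_fiberMixingAt {kX kY : ℕ} {X : Set (ℕ → Fin kX)}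
    {Y : Set (ℕ → Fin kY)} {πs : Fin kX → Fin kY} (h : FiberMixing X Y πs)
    (hXY : Set.MapsTo (fun x => πs ∘ x) X Y) : ∃ k, FiberMixingAt X πs k := by
  obtain ⟨k, hk⟩ := h
  refine ⟨k, fun u hu v hv huv => ?_⟩
  obtain ⟨a, ⟨z, hz, hza⟩, ha_start, ha_end, ha_fiber⟩ := hk (fun i => πs (u i))
    ⟨πs ∘ u, hXY hu, fun _ => rfl⟩ (fun i => u i) (fun i => v i)
    ⟨u, hu, fun _ => rfl⟩ ⟨v, hv, fun _ => rfl⟩ (fun _ => rfl)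
    (fun i => (huv i (by omega)).symm)
  refine ⟨z, hz, (hza 0).trans ha_start, (hza (Fin.last k)).trans ha_end, fun i hi => ?_⟩
  exact (congrArg πs (hza ⟨i, by omega⟩)).trans (ha_fiber ⟨i, by omega⟩)

section Bowen

variable {α : Type*} {X : Set (ℕ → α)} {f : (ℕ → α) → ℝ} {L M : ℝ}

/-- The Bowen property of `f` on `X` with constant `L`: the Birkhoff sum `S_n f` varies by at most
`L` over each `n`-cylinder, uniformly in `n`. -/
def BowenOn (X : Set (ℕ → α)) (f : (ℕ → α) → ℝ) (L : ℝ) : Prop :=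
  ∀ n, ∀ x ∈ X, ∀ z ∈ cyl X x n, |birk f n x - birk f n z| ≤ L

theorem GibbsSeq.exists_le_mul [MeasurableSpace α] {F : ℕ → (ℕ → α) → ℝ} {μ : Measure (ℕ → α)}
    (hμ : GibbsSeq X F μ) (hF : ∀ n x, 0 < F n x) :
    ∃ C : ℝ, 0 < C ∧ ∀ n, 1 ≤ n → ∀ x ∈ X, ∀ z ∈ cyl X x n, F n x ≤ C * F n z := by
  obtain ⟨P, C, hC, hμ⟩ := hμ
  refine ⟨C * C, by positivity, fun n hn x hx z hz => ?_⟩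
  have hscale : 0 < Real.exp (-(n : ℝ) * P) := Real.exp_pos _
  have lower := (hμ x hx n hn).1
  have upper := (hμ z hz.1 n hn).2
  rw [le_div_iff₀ (mul_pos hscale (hF n x)), inv_mul_le_iff₀ hC] at lower
  rw [div_le_iff₀ (mul_pos hscale (hF n z)), cyl_eq_of_mem hz] at upper
  refine le_of_mul_le_mul_left ?_ hscale
  calc Real.exp (-(n : ℝ) * P) * F n x
      ≤ C * (μ (cyl X x n)).toReal := lower
    _ ≤ C * (C * (Real.exp (-(n : ℝ) * P) * F n z)) := by gcongr
    _ = Real.exp (-(n : ℝ) * P) * (C * C * F n z) := by ring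

theorem GibbsFun.exists_bowenOn [MeasurableSpace α] {μ : Measure (ℕ → α)}
    (hμ : GibbsFun X f μ) : ∃ L, BowenOn X f L := by
  obtain ⟨C, hC, hle⟩ := GibbsSeq.exists_le_mul hμ fun _ _ => Real.exp_pos _
  have birk_sub_le : ∀ n, 1 ≤ n → ∀ x ∈ X, ∀ z ∈ cyl X x n,
      birk f n x - birk f n z ≤ Real.log C := by
    intro n hn x hx z hz
    have h := Real.log_le_log (Real.exp_pos _) (hle n hn x hx z hz)
    rw [Real.log_mul hC.ne' (Real.exp_ne_zero _), Real.log_exp, Real.log_exp] at h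
    linarith
  refine ⟨max 0 (Real.log C), fun n x hx z hz => ?_⟩
  rcases Nat.eq_zero_or_pos n with rfl | hn
  · simp [birk]
  have hxz : x ∈ cyl X z n := cyl_eq_of_mem hz ▸ ⟨hx, fun _ _ => rfl⟩
  refine (abs_sub_le_iff.2 ⟨?_, ?_⟩).trans (le_max_right _ _)
  · exact birk_sub_le n hn x hx z hz
  · exact birk_sub_le n hn z hz.1 x hxz

theorem BowenOn.isBounded_image [Finite α] (hf : BowenOn X f L) :
    Bornology.IsBounded (f '' X) := by
  have hcover : f '' X ⊆ ⋃ a, f '' {x ∈ X | x 0 = a} := by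
    rintro _ ⟨x, hx, rfl⟩
    exact Set.mem_iUnion.2 ⟨x 0, x, ⟨hx, rfl⟩, rfl⟩
  refine (Bornology.isBounded_iUnion.2 fun a => ?_).subset hcover
  refine Metric.isBounded_iff.2 ⟨L, ?_⟩
  rintro _ ⟨x, ⟨hx, rfl⟩, rfl⟩ _ ⟨z, ⟨hz, hzx⟩, rfl⟩
  have hz_cyl : z ∈ cyl X x 1 := ⟨hz, fun i hi => by rw [Nat.lt_one_iff.1 hi, hzx]⟩
  simpa [birk, Real.dist_eq] using hf 1 x hx z hz_cyl

theorem abs_birk_sub_birk_le_mul (hX : Set.MapsTo shift X X)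
    (hM : ∀ x ∈ X, ∀ z ∈ X, |f x - f z| ≤ M) {p q : ℕ → α} (hp : p ∈ X) (hq : q ∈ X) (n : ℕ) :
    |birk f n p - birk f n q| ≤ n * M := by
  rw [birk, birk, ← Finset.sum_sub_distrib]
  refine (Finset.abs_sum_le_sum_abs _ _).trans ?_
  simpa using Finset.sum_le_card_nsmul (Finset.range n) _ M
    fun i _ => hM _ (hX.iterate i hp) _ (hX.iterate i hq)

theorem BowenOn.abs_birk_sub_birk_le (hf : BowenOn X f L) (hX : Set.MapsTo shift X X)
    (hM : ∀ x ∈ X, ∀ z ∈ X, |f x - f z| ≤ M) {p q : ℕ → α} (hp : p ∈ X) (hq : q ∈ X)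
    {s t n K : ℕ} (hst : s ≤ t) (htn : t ≤ n) (hK : s + n ≤ t + K)
    (hpq : ∀ i, s ≤ i → i < t → p i = q i) :
    |birk f n p - birk f n q| ≤ L + K * M := by
  obtain ⟨b, rfl⟩ := Nat.exists_eq_add_of_le hst
  obtain ⟨c, rfl⟩ := Nat.exists_eq_add_of_le htn
  have hM0 : 0 ≤ M := (abs_nonneg _).trans (hM p hp p hp)
  have head := abs_birk_sub_birk_le_mul hX hM hp hq s
  have tail := abs_birk_sub_birk_le_mul hX hM
    (hX.iterate (s + b) hp) (hX.iterate (s + b) hq) c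
  have middle := hf b _ (hX.iterate s hp) (shift^[s] q) ⟨hX.iterate s hq, fun i hi => by
    rw [shift_iterate_apply, shift_iterate_apply, hpq (s + i) (by omega) (by omega)]⟩
  have hcount : (s : ℝ) * M + c * M ≤ K * M := by
    rw [← add_mul]
    gcongr
    exact_mod_cast (by omega : s + c ≤ K)
  rw [birk_add, birk_add, birk_add, birk_add]
  rw [abs_le] at head middle tail ⊢
  constructor <;> linarith

end Bowen

section FiberWeight

variable {α β : Type*} {X : Set (ℕ → α)} {π : α → β} {f : (ℕ → α) → ℝ} {L M : ℝ} {n m : ℕ}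

/-- The contribution of the block `u` to `g_n(y)`. Blocks not occurring in `X` need no separate
clause, because the supremum of an empty family of reals is `0`. -/
def fiberWeight (X : Set (ℕ → α)) (π : α → β) (f : (ℕ → α) → ℝ) (n : ℕ) (y : ℕ → β)
    (u : Fin n → α) : ℝ :=
  if ∀ i : Fin n, π (u i) = y i then
    ⨆ x : ↥{z ∈ X | ∀ i : Fin n, z i = u i}, Real.exp (birk f n x)
  else 0

theorem gseq_eq_sum_fiberWeight {kX kY : ℕ} (X : Set (ℕ → Fin kX)) (πs : Fin kX → Fin kY)
    (f : (ℕ → Fin kX) → ℝ) (n : ℕ) (y : ℕ → Fin kY) :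
    gseq X πs f n y = ∑ u, fiberWeight X πs f n y u := by
  refine Finset.sum_congr rfl fun u _ => ?_
  by_cases hu : ∃ x ∈ X, ∀ i : Fin n, x i = u i
  · simp only [hu, true_and, fiberWeight]
    -- the two sides differ only in their decidability instances
    congr
  · have : IsEmpty ↥{z ∈ X | ∀ i : Fin n, z i = u i} := ⟨fun z => hu ⟨z, z.2⟩⟩
    simp only [hu, false_and, fiberWeight, Real.iSup_of_isEmpty, ite_self]

theorem fiberWeight_nonneg (y : ℕ → β) (u : Fin n → α) : 0 ≤ fiberWeight X π f n y u := by
  unfold fiberWeight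
  split_ifs
  · exact Real.iSup_nonneg fun _ => (Real.exp_pos _).le
  · exact le_rfl

theorem fiberWeight_le {y : ℕ → β} {u : Fin n → α} {B : ℝ} (hB : 0 ≤ B)
    (h : ∀ x ∈ X, (∀ i : Fin n, x i = u i) → (∀ i : Fin n, π (u i) = y i) →
      Real.exp (birk f n x) ≤ B) :
    fiberWeight X π f n y u ≤ B := by
  unfold fiberWeight
  split_ifs with hu
  · exact Real.iSup_le (fun x => h x x.2.1 x.2.2 hu) hB
  · exact hB

theorem exists_mem_of_fiberWeight_ne_zero {y : ℕ → β} {u : Fin n → α}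
    (h : fiberWeight X π f n y u ≠ 0) :
    ∃ x ∈ X, (∀ i : Fin n, x i = u i) ∧ ∀ i < n, π (x i) = y i := by
  contrapose! h
  refine (fiberWeight_le le_rfl fun x hx hxu hu => ?_).antisymm (fiberWeight_nonneg y u)
  obtain ⟨i, hi, hne⟩ := h x hx hxu
  exact absurd ((congrArg π (hxu ⟨i, hi⟩)).trans (hu ⟨i, hi⟩)) hne

theorem BowenOn.exp_birk_le_fiberWeight (hf : BowenOn X f L) {x : ℕ → α} (hx : x ∈ X)
    {y : ℕ → β} {u : Fin n → α} (hxu : ∀ i : Fin n, x i = u i)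
    (hu : ∀ i : Fin n, π (u i) = y i) :
    Real.exp (birk f n x) ≤ fiberWeight X π f n y u := by
  rw [fiberWeight, if_pos hu]
  refine le_ciSup (f := fun z : ↥{z ∈ X | ∀ i : Fin n, z i = u i} => Real.exp (birk f n z))
    ⟨Real.exp (birk f n x + L), ?_⟩ ⟨x, hx, hxu⟩
  rintro _ ⟨⟨z, hz, hzu⟩, rfl⟩
  have hz_cyl : z ∈ cyl X x n := ⟨hz, fun i hi => (hzu ⟨i, hi⟩).trans (hxu ⟨i, hi⟩).symm⟩
  have := (abs_le.1 (hf n x hx z hz_cyl)).1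
  exact Real.exp_le_exp.2 (by linarith)

theorem BowenOn.fiberWeight_le_exp (hf : BowenOn X f L) (hX : Set.MapsTo shift X X)
    (hM : ∀ x ∈ X, ∀ z ∈ X, |f x - f z| ≤ M) {q : ℕ → α} (hq : q ∈ X) {s t K : ℕ}
    (hst : s ≤ t) (htn : t ≤ n) (hK : s + n ≤ t + K) {y : ℕ → β} {u : Fin n → α}
    (hqu : ∀ i : Fin n, s ≤ i → i < t → q i = u i) :
    fiberWeight X π f n y u ≤ Real.exp (birk f n q + (L + K * M)) := by
  refine fiberWeight_le (Real.exp_pos _).le fun z hz hzu _ => Real.exp_le_exp.2 ?_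
  have h := hf.abs_birk_sub_birk_le hX hM hz hq hst htn hK fun i hsi hit =>
    (hzu ⟨i, by omega⟩).trans (hqu ⟨i, by omega⟩ hsi hit).symm
  linarith [(abs_le.1 h).2]

theorem BowenOn.fiberWeight_add_le (hf : BowenOn X f L) (hX : Set.MapsTo shift X X)
    (y : ℕ → β) (w : Fin (n + m) → α) :
    fiberWeight X π f (n + m) y w ≤ fiberWeight X π f n y (fun i => w (Fin.castAdd m i)) *
      fiberWeight X π f m (shift^[n] y) (fun i => w (Fin.natAdd n i)) := by
  refine fiberWeight_le (mul_nonneg (fiberWeight_nonneg ..) (fiberWeight_nonneg ..))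
    fun x hx hxw hw => ?_
  rw [birk_add, Real.exp_add]
  refine mul_le_mul ?_ ?_ (Real.exp_pos _).le (fiberWeight_nonneg ..)
  · exact hf.exp_birk_le_fiberWeight hx (fun i => hxw (Fin.castAdd m i))
      fun i => hw (Fin.castAdd m i)
  · refine hf.exp_birk_le_fiberWeight (hX.iterate n hx) (fun i => ?_) fun i => ?_
    · exact (shift_iterate_apply x n i).trans (hxw (Fin.natAdd n i))
    · exact (hw (Fin.natAdd n i)).trans (shift_iterate_apply y n i).symm

/-- The positions of an `(n + m)`-block among the `k` on either side of the seam between its first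
`n` and its last `m` symbols: the only ones altered when two blocks are joined. -/
def seam (n m k : ℕ) : Finset (Fin (n + m)) :=
  {i | n ≤ i + k ∧ (i : ℕ) < n + k}

theorem notMem_seam {k : ℕ} {i : Fin (n + m)} : i ∉ seam n m k ↔ i + k < n ∨ n + k ≤ i := by
  rw [seam, Finset.mem_filter_univ]
  omega

theorem card_seam_le (n m k : ℕ) : (seam n m k).card ≤ 2 * k := by
  have hsub : (seam n m k).map Fin.valEmbedding ⊆ Finset.Ico (n - k) (n + k) := by
    intro j hj
    obtain ⟨i, hi, rfl⟩ := Finset.mem_map.1 hj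
    have := (Finset.mem_filter.1 hi).2
    simp only [Fin.valEmbedding_apply, Finset.mem_Ico]
    omega
  have hcard := Finset.card_le_card hsub
  rw [Finset.card_map, Nat.card_Ico] at hcard
  omega

theorem BowenOn.fiberWeight_mul_le (hf : BowenOn X f L) (hX : Set.MapsTo shift X X)
    (hM : ∀ x ∈ X, ∀ z ∈ X, |f x - f z| ≤ M) {q : ℕ → α} (hq : q ∈ X) {y : ℕ → β}
    (hqy : ∀ i < n + m, π (q i) = y i) {k : ℕ} {w : Fin (n + m) → α}
    (hqw : ∀ i ∉ seam n m k, q i = w i) :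
    fiberWeight X π f n y (fun i => w (Fin.castAdd m i)) *
        fiberWeight X π f m (shift^[n] y) (fun i => w (Fin.natAdd n i)) ≤
      Real.exp (2 * (L + k * M)) * fiberWeight X π f (n + m) y (fun i => q i) := by
  have left_le : fiberWeight X π f n y (fun i => w (Fin.castAdd m i)) ≤
      Real.exp (birk f n q + (L + k * M)) :=
    hf.fiberWeight_le_exp hX hM hq (Nat.zero_le (n - k)) (Nat.sub_le n k) (by omega)
      fun i _ hi => hqw (Fin.castAdd m i) (notMem_seam.2 (.inl (Nat.add_lt_of_lt_sub hi)))
  have right_le : fiberWeight X π f m (shift^[n] y) (fun i => w (Fin.natAdd n i)) ≤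
      Real.exp (birk f m (shift^[n] q) + (L + k * M)) :=
    hf.fiberWeight_le_exp hX hM (hX.iterate n hq) (min_le_right k m) le_rfl (by omega)
      fun i hi _ => (shift_iterate_apply q n i).trans <|
        hqw (Fin.natAdd n i) (notMem_seam.2 (.inr (Nat.add_le_add_left (by omega : k ≤ i) n)))
  calc _ ≤ Real.exp (birk f n q + (L + k * M)) *
        Real.exp (birk f m (shift^[n] q) + (L + k * M)) :=
        mul_le_mul left_le right_le (fiberWeight_nonneg ..) (Real.exp_pos _).le
    _ = Real.exp (2 * (L + k * M)) * Real.exp (birk f (n + m) q) := by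
        rw [← Real.exp_add, ← Real.exp_add, birk_add]
        congr 1
        ring
    _ ≤ _ := by
        gcongr
        exact hf.exp_birk_le_fiberWeight hq (fun _ => rfl) fun i => hqy i i.2

theorem BowenOn.exists_fiberWeight_mul_le {R : α → α → Prop} {k : ℕ}
    (hf : BowenOn (transitionShift R) f L)
    (hM : ∀ x ∈ transitionShift R, ∀ z ∈ transitionShift R, |f x - f z| ≤ M)
    (hk : FiberMixingAt (transitionShift R) π k) {x : ℕ → α} (hx : x ∈ transitionShift R)
    (w : Fin (n + m) → α) :
    ∃ c : Fin (n + m) → α, (∀ i ∉ seam n m k, c i = w i) ∧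
      fiberWeight (transitionShift R) π f n (π ∘ x) (fun i => w (Fin.castAdd m i)) *
          fiberWeight (transitionShift R) π f m (shift^[n] (π ∘ x))
            (fun i => w (Fin.natAdd n i)) ≤
        Real.exp (2 * (L + k * M)) *
          fiberWeight (transitionShift R) π f (n + m) (π ∘ x) c := by
  by_cases hzero : fiberWeight (transitionShift R) π f n (π ∘ x)
      (fun i => w (Fin.castAdd m i)) * fiberWeight (transitionShift R) π f m
        (shift^[n] (π ∘ x)) (fun i => w (Fin.natAdd n i)) = 0
  · refine ⟨w, fun _ _ => rfl, hzero.trans_le ?_⟩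
    exact mul_nonneg (Real.exp_pos _).le (fiberWeight_nonneg ..)
  obtain ⟨hleft, hright⟩ := mul_ne_zero_iff.1 hzero
  obtain ⟨p, hp, hpw, hpx⟩ := exists_mem_of_fiberWeight_ne_zero hleft
  obtain ⟨r, hr, hrw, hrx⟩ := exists_mem_of_fiberWeight_ne_zero hright
  simp only [shift_iterate_apply] at hrx
  obtain ⟨q, hq, hqp, hqr, hqx⟩ := hk.exists_join hp hr hx hpx hrx
  have hqw : ∀ i ∉ seam n m k, q i = w i := by
    intro i hi
    rw [notMem_seam] at hi
    induction i using Fin.addCases with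
    | left i =>
      rw [Fin.val_castAdd] at hi
      exact (hqp i (by omega)).trans (hpw i)
    | right i =>
      rw [Fin.val_natAdd] at hi
      exact (hqr i i.2 (by omega)).trans (hrw i)
  exact ⟨fun i => q i, hqw, hf.fiberWeight_mul_le mapsTo_shift_transitionShift hM hq hqx hqw⟩

end FiberWeight

theorem sum_le_card_pow_mul_sum {ι α : Type*} [Fintype ι] [DecidableEq ι] [Fintype α]
    (S : Finset ι) {F G : (ι → α) → ℝ} (hG : ∀ c, 0 ≤ G c)
    (h : ∀ w, ∃ c, (∀ i ∉ S, c i = w i) ∧ F w ≤ G c) :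
    ∑ w, F w ≤ (Fintype.card α : ℝ) ^ S.card * ∑ c, G c := by
  choose Φ hΦ hFG using h
  have hinj : Function.Injective fun w => (fun i : S => w i, Φ w) := by
    intro w w' hww'
    obtain ⟨hS, hΦww'⟩ := Prod.mk.inj hww'
    funext i
    by_cases hi : i ∈ S
    · exact congrFun hS ⟨i, hi⟩
    · rw [← hΦ w i hi, ← hΦ w' i hi, hΦww']
  calc ∑ w, F w ≤ ∑ w, G (Φ w) := Finset.sum_le_sum fun w _ => hFG w
    _ = ∑ b ∈ Finset.univ.map ⟨_, hinj⟩, G b.2 := by rw [Finset.sum_map]; rfl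
    _ ≤ ∑ b : (S → α) × (ι → α), G b.2 :=
        Finset.sum_le_sum_of_subset_of_nonneg (Finset.subset_univ _) fun b _ _ => hG b.2
    _ = (Fintype.card α : ℝ) ^ S.card * ∑ c, G c := by
        simp [Fintype.sum_prod_type]

theorem exists_aaOn_of_le_mul {α : Type*} {X : Set (ℕ → α)} {F : ℕ → (ℕ → α) → ℝ} {K : ℝ}
    (hF : ∀ n x, 0 ≤ F n x)
    (upper : ∀ x ∈ X, ∀ n m, F (n + m) x ≤ F n x * F m (shift^[n] x))
    (lower : ∀ x ∈ X, ∀ n m, F n x * F m (shift^[n] x) ≤ K * F (n + m) x) :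
    ∃ C : ℝ, 0 < C ∧ AAOn X F C := by
  have hK : K ≤ Real.exp (max K 1) := by
    linarith [Real.add_one_le_exp (max K 1), le_max_left K 1]
  refine ⟨max K 1, by positivity, fun x hx n m _ _ => ⟨?_, ?_⟩⟩
  · rw [Real.exp_neg, inv_mul_le_iff₀ (Real.exp_pos _)]
    exact (lower x hx n m).trans (mul_le_mul_of_nonneg_right hK (hF _ _))
  · refine (upper x hx n m).trans (le_mul_of_one_le_left (mul_nonneg (hF _ _) (hF _ _)) ?_)
    exact Real.one_le_exp (by positivity)

section Gseq

variable {kX kY : ℕ} {X : Set (ℕ → Fin kX)} {πs : Fin kX → Fin kY} {f : (ℕ → Fin kX) → ℝ}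
  {L M : ℝ}

theorem gseq_nonneg (n : ℕ) (y : ℕ → Fin kY) : 0 ≤ gseq X πs f n y := by
  rw [gseq_eq_sum_fiberWeight]
  exact Finset.sum_nonneg fun u _ => fiberWeight_nonneg y u

theorem gseq_mul_gseq (n m : ℕ) (y y' : ℕ → Fin kY) :
    gseq X πs f n y * gseq X πs f m y' =
      ∑ w : Fin (n + m) → Fin kX, fiberWeight X πs f n y (fun i => w (Fin.castAdd m i)) *
        fiberWeight X πs f m y' (fun i => w (Fin.natAdd n i)) := by
  rw [gseq_eq_sum_fiberWeight, gseq_eq_sum_fiberWeight, Fintype.sum_mul_sum,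
    ← Fintype.sum_prod_type', ← (Fin.appendEquiv n m).symm.sum_comp]
  rfl

theorem BowenOn.gseq_add_le (hf : BowenOn X f L) (hX : Set.MapsTo shift X X) (n m : ℕ)
    (y : ℕ → Fin kY) :
    gseq X πs f (n + m) y ≤ gseq X πs f n y * gseq X πs f m (shift^[n] y) := by
  rw [gseq_mul_gseq, gseq_eq_sum_fiberWeight]
  exact Finset.sum_le_sum fun w _ => hf.fiberWeight_add_le hX y w

theorem BowenOn.gseq_mul_gseq_le {R : Fin kX → Fin kX → Prop} {k : ℕ}
    (hf : BowenOn (transitionShift R) f L)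
    (hM : ∀ x ∈ transitionShift R, ∀ z ∈ transitionShift R, |f x - f z| ≤ M)
    (hk : FiberMixingAt (transitionShift R) πs k) {x : ℕ → Fin kX}
    (hx : x ∈ transitionShift R) (n m : ℕ) :
    gseq (transitionShift R) πs f n (πs ∘ x) *
        gseq (transitionShift R) πs f m (shift^[n] (πs ∘ x)) ≤
      (kX : ℝ) ^ (2 * k) * Real.exp (2 * (L + k * M)) *
        gseq (transitionShift R) πs f (n + m) (πs ∘ x) := by
  have hkX : (1 : ℝ) ≤ kX := by exact_mod_cast (x 0).pos
  rw [gseq_mul_gseq, gseq_eq_sum_fiberWeight _ _ _ (n + m), mul_assoc, Finset.mul_sum]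
  have hnonneg : ∀ c, 0 ≤ Real.exp (2 * (L + k * M)) *
      fiberWeight (transitionShift R) πs f (n + m) (πs ∘ x) c :=
    fun c => mul_nonneg (Real.exp_pos _).le (fiberWeight_nonneg _ c)
  refine (sum_le_card_pow_mul_sum (seam n m k) hnonneg
    (hf.exists_fiberWeight_mul_le hM hk hx)).trans ?_
  rw [Fintype.card_fin]
  exact mul_le_mul_of_nonneg_right (pow_le_pow_right₀ hkX (card_seam_le n m k))
    (Finset.sum_nonneg fun c _ => hnonneg c)

end Gseq

theorem stmt_19_general {kX kY : ℕ} (R : Fin kX → Fin kX → Prop) {Y : Set (ℕ → Fin kY)}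
    {πs : Fin kX → Fin kY} (hsurj : (fun x => πs ∘ x) '' transitionShift R = Y)
    {f : (ℕ → Fin kX) → ℝ} (hf : ∃ L, BowenOn (transitionShift R) f L)
    (hfib : FiberMixing (transitionShift R) Y πs) :
    ∃ C : ℝ, 0 < C ∧ AAOn Y (gseq (transitionShift R) πs f) C := by
  subst hsurj
  obtain ⟨L, hL⟩ := hf
  obtain ⟨k, hk⟩ := hfib.exists_fiberMixingAt (Set.mapsTo_image _ _)
  obtain ⟨M, hM⟩ := Metric.isBounded_iff.1 hL.isBounded_image
  have hosc : ∀ x ∈ transitionShift R, ∀ z ∈ transitionShift R, |f x - f z| ≤ M :=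
    fun x hx z hz => hM (Set.mem_image_of_mem f hx) (Set.mem_image_of_mem f hz)
  refine exists_aaOn_of_le_mul (K := (kX : ℝ) ^ (2 * k) * Real.exp (2 * (L + k * M))) gseq_nonneg
    (fun y _ n m => hL.gseq_add_le mapsTo_shift_transitionShift n m y) ?_
  rintro _ ⟨x, hx, rfl⟩ n m
  exact hL.gseq_mul_gseq_le hosc hk hx n m

/-- Proposition `aafiber` (i): if `π` is fiber-wise sub-positive
mixing, then the sequence `𝓖 = {log g_n}` associated to the relative pressure function
`P(σ_X, π, f)` is almost additive on `Y`. -/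
theorem stmt_19 {kX kY : ℕ}
    (A : Fin kX → Fin kX → ℕ) (hA01 : ∀ i j, A i j = 0 ∨ A i j = 1)
    (X : Set (ℕ → Fin kX)) (hXdef : X = {x | ∀ n : ℕ, A (x n) (x (n + 1)) = 1})
    (hmix : ∃ p : ℕ, 1 ≤ p ∧ ∀ i j, 0 < ((Matrix.of A) ^ p) i j)
    (Y : Set (ℕ → Fin kY)) (hY : IsSubshift Y)
    (πs : Fin kX → Fin kY) (hsurj : (fun x => πs ∘ x) '' X = Y)
    (f : (ℕ → Fin kX) → ℝ) (hf : ContinuousOn f X)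
    (μ : Measure (ℕ → Fin kX)) (hμinv : IsInvariantOn μ X) (hμG : GibbsFun X f μ)
    (huniq : ∀ ν : Measure (ℕ → Fin kX), IsInvariantOn ν X → GibbsFun X f ν → ν = μ)
    (hfib : FiberMixing X Y πs) :
    ∃ C : ℝ, 0 < C ∧ AAOn Y (gseq X πs f) C := by
  subst hXdef
  exact stmt_19_general (fun i j => A i j = 1) hsurj hμG.exists_bowenOn hfib
end
end
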